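/- Let N ≥ 3, α > 0, and let p > 1 satisfy p + 1 < 2(N+α)/(N-2) (equivalently p + 1 < 2* + 2α/(N-2) with 2* = 2N/(N-2)). Then the Hénon problem -Δu = |x|^α u^p in B, u > 0 in B, u = 0 on ∂B, possesses a radial classical solution: there exists u continuous on the closed unit ball B̄, twice continuously differentiable on B, radially symmetric (u(x) depends only on |x|), with u > 0 in B, u = 0 on ∂B, and -Δu(x) = |x|^α u(x)^p for all x ∈ B. -/

import Mathlib

open MeasureTheory Metric Set Filter

noncomputable section

abbrev E (N : ℕ) := EuclideanSpace ℝ (Fin N)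

/-- The Laplacian: sum of pure second partial derivatives. -/
def lap {N : ℕ} (u : E N → ℝ) (x : E N) : ℝ :=
  ∑ i, fderiv ℝ (fun y => fderiv ℝ u y (EuclideanSpace.single i 1)) x (EuclideanSpace.single i 1)

/-
Shoot from the origin: the radial equation in its integrated form `v' = -r^(1-N) ∫₀ʳ s^(N-1+α) v^p`,
with `v 0 = 1`, is a fixed point problem for a causal operator and has a global solution. If `v`
stayed positive, then `(N-2) v + r v' ≥ 0`, because otherwise `r^(N-2) v` would decrease to `-∞`.
This gives the decay `r^(2+α) v^(p-1) ≤ C`, which in the subcritical range forces an upper bound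
tending to `0` on the Pohozaev functional, while that functional increases strictly from `0`. So `v`
has a first zero `R`, and the scaling symmetry `v ↦ R^((2+α)/(p-1)) v(R ·)` moves it to `1`.
-/

open scoped Topology BoundedContinuousFunction Interval

/-- The exponential weight `exp (2 ∫₀^|r| ℓ)`. In the supremum norm it weights, integrating a
function with Lipschitz constant `ℓ` becomes a contraction with factor `1 / 2`. -/
def expWeight (ℓ : ℝ → ℝ) (r : ℝ) : ℝ :=
  Real.exp (2 * ∫ t in (0 : ℝ)..|r|, ℓ t)

section ExpWeight

variable {ℓ : ℝ → ℝ}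

theorem expWeight_pos (r : ℝ) : 0 < expWeight ℓ r :=
  Real.exp_pos _

theorem expWeight_abs (r : ℝ) : expWeight ℓ |r| = expWeight ℓ r := by
  rw [expWeight, expWeight, abs_abs]

theorem continuous_expWeight (hℓ : Continuous ℓ) : Continuous (expWeight ℓ) := by
  have hprim := intervalIntegral.continuous_primitive (μ := volume)
    (fun a b => hℓ.intervalIntegrable a b) 0
  exact Real.continuous_exp.comp (continuous_const.mul (hprim.comp continuous_abs))

theorem expWeight_mono (hℓ : Continuous ℓ) (hℓ0 : ∀ t, 0 ≤ t → 0 ≤ ℓ t) {s t : ℝ}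
    (hs : 0 ≤ s) (hst : s ≤ t) : expWeight ℓ s ≤ expWeight ℓ t := by
  rw [expWeight, expWeight, abs_of_nonneg hs, abs_of_nonneg (hs.trans hst)]
  gcongr 1
  gcongr 2
  refine intervalIntegral.integral_mono_interval le_rfl hs hst ?_ (hℓ.intervalIntegrable _ _)
  filter_upwards [ae_restrict_mem measurableSet_Ioc] with x hx using hℓ0 x hx.1.le

theorem one_le_expWeight (hℓ : Continuous ℓ) (hℓ0 : ∀ t, 0 ≤ t → 0 ≤ ℓ t) {t : ℝ}
    (ht : 0 ≤ t) : 1 ≤ expWeight ℓ t := by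
  simpa [expWeight] using expWeight_mono hℓ hℓ0 le_rfl ht

theorem two_mul_integral_mul_expWeight (hℓ : Continuous ℓ) {r : ℝ} (hr : 0 ≤ r) :
    2 * ∫ t in (0 : ℝ)..r, ℓ t * expWeight ℓ t = expWeight ℓ r - 1 := by
  have hderiv : ∀ x ∈ uIcc 0 r, HasDerivAt (fun x => Real.exp (2 * ∫ t in (0 : ℝ)..x, ℓ t))
      (Real.exp (2 * ∫ t in (0 : ℝ)..x, ℓ t) * (2 * ℓ x)) x := fun x _ =>
    ((hℓ.integral_hasStrictDerivAt 0 x).hasDerivAt.const_mul 2).exp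
  have hcont : Continuous fun x => Real.exp (2 * ∫ t in (0 : ℝ)..x, ℓ t) * (2 * ℓ x) := by
    have := intervalIntegral.continuous_primitive (μ := volume)
      (fun a b => hℓ.intervalIntegrable a b) 0
    fun_prop
  have hftc := intervalIntegral.integral_eq_sub_of_hasDerivAt hderiv (hcont.intervalIntegrable 0 r)
  simp only [intervalIntegral.integral_same, mul_zero, Real.exp_zero] at hftc
  rw [expWeight, abs_of_nonneg hr, ← hftc, ← intervalIntegral.integral_const_mul]
  refine intervalIntegral.integral_congr fun t ht => ?_
  rw [uIcc_of_le hr] at ht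
  simp only [expWeight, abs_of_nonneg ht.1]
  ring

theorem norm_integral_le_expWeight {Y : Type*} [NormedAddCommGroup Y] [NormedSpace ℝ Y]
    (hℓ : Continuous ℓ) {ψ : ℝ → Y} {M r : ℝ} (hr : 0 ≤ r) (hM : 0 ≤ M)
    (hψ : ∀ t, 0 ≤ t → ‖ψ t‖ ≤ ℓ t * (M * expWeight ℓ t)) :
    ‖∫ t in (0 : ℝ)..r, ψ t‖ ≤ M / 2 * expWeight ℓ r := by
  have hcont : Continuous fun t => ℓ t * (M * expWeight ℓ t) :=
    hℓ.mul (continuous_const.mul (continuous_expWeight hℓ))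
  calc ‖∫ t in (0 : ℝ)..r, ψ t‖ ≤ ∫ t in (0 : ℝ)..r, ℓ t * (M * expWeight ℓ t) :=
        intervalIntegral.norm_integral_le_of_norm_le hr
          (Eventually.of_forall fun t ht => hψ t ht.1.le) (hcont.intervalIntegrable _ _)
    _ = M / 2 * (2 * ∫ t in (0 : ℝ)..r, ℓ t * expWeight ℓ t) := by
        simp only [mul_left_comm (ℓ _) M, intervalIntegral.integral_const_mul]
        ring
    _ = M / 2 * (expWeight ℓ r - 1) := by rw [two_mul_integral_mul_expWeight hℓ hr]
    _ ≤ M / 2 * expWeight ℓ r := by gcongr; linarith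

end ExpWeight

section Causal

variable {Y : Type*} [NormedAddCommGroup Y]

/-- An operator `Φ` on continuous functions is causally Lipschitz with rate `L` if `Φ v t` is an
`L t`-Lipschitz function of the restriction of `v` to `[0, t]`, for every `t ≥ 0`. -/
def IsCausalLipschitz (Φ : C(ℝ, Y) → C(ℝ, Y)) (L : ℝ → ℝ) : Prop :=
  ∀ (v w : C(ℝ, Y)) (t M : ℝ), 0 ≤ t → (∀ s ∈ Icc 0 t, ‖v s - w s‖ ≤ M) →
    ‖Φ v t - Φ w t‖ ≤ L t * M

namespace IsCausalLipschitz

variable {Φ : C(ℝ, Y) → C(ℝ, Y)} {L ℓ : ℝ → ℝ}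

theorem rate_nonneg (hΦ : IsCausalLipschitz Φ L) {t : ℝ} (ht : 0 ≤ t) : 0 ≤ L t := by
  simpa using hΦ 0 0 t 1 ht (by simp)

theorem mono (hΦ : IsCausalLipschitz Φ L) (hLℓ : ∀ t, L t ≤ ℓ t) : IsCausalLipschitz Φ ℓ := by
  intro v w t M ht hM
  have hM0 : 0 ≤ M := (norm_nonneg _).trans (hM 0 ⟨le_rfl, ht⟩)
  exact (hΦ v w t M ht hM).trans (by gcongr; exact hLℓ t)

theorem norm_sub_le_expWeight (hΦ : IsCausalLipschitz Φ ℓ) (hℓ : Continuous ℓ) {v w : C(ℝ, Y)}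
    {M t : ℝ} (hM : 0 ≤ M) (hvw : ∀ s, ‖v s - w s‖ ≤ M * expWeight ℓ s) (ht : 0 ≤ t) :
    ‖Φ v t - Φ w t‖ ≤ ℓ t * (M * expWeight ℓ t) :=
  hΦ v w t _ ht fun s hs => (hvw s).trans <|
    mul_le_mul_of_nonneg_left (expWeight_mono hℓ (fun _ => hΦ.rate_nonneg) hs.1 hs.2) hM

theorem norm_le_expWeight (hΦ : IsCausalLipschitz Φ ℓ) (hℓ : Continuous ℓ)
    (hΦ0 : ∀ t, ‖Φ 0 t‖ ≤ ℓ t) {v : C(ℝ, Y)} {M t : ℝ} (hM : 0 ≤ M)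
    (hv : ∀ s, ‖v s‖ ≤ M * expWeight ℓ s) (ht : 0 ≤ t) :
    ‖Φ v t‖ ≤ ℓ t * ((M + 1) * expWeight ℓ t) := by
  have hsub : ‖Φ v t - Φ 0 t‖ ≤ ℓ t * (M * expWeight ℓ t) :=
    hΦ.norm_sub_le_expWeight hℓ hM (fun s => by simpa using hv s) ht
  have hzero : ‖Φ 0 t‖ ≤ ℓ t * expWeight ℓ t :=
    (hΦ0 t).trans <| le_mul_of_one_le_right (hΦ.rate_nonneg ht) <|
      one_le_expWeight hℓ (fun _ => hΦ.rate_nonneg) ht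
  calc ‖Φ v t‖ ≤ ‖Φ v t - Φ 0 t‖ + ‖Φ 0 t‖ := by simpa using norm_add_le (Φ v t - Φ 0 t) (Φ 0 t)
    _ ≤ ℓ t * (M * expWeight ℓ t) + ℓ t * expWeight ℓ t := add_le_add hsub hzero
    _ = ℓ t * ((M + 1) * expWeight ℓ t) := by ring

end IsCausalLipschitz

variable [NormedSpace ℝ Y] {Φ : C(ℝ, Y) → C(ℝ, Y)} {L ℓ : ℝ → ℝ}

/-- The function `expWeight ℓ • w`. As `w` ranges over the bounded continuous functions, these are
the continuous functions of finite weighted supremum norm. -/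
def weighted (hℓ : Continuous ℓ) (w : ℝ →ᵇ Y) : C(ℝ, Y) :=
  ⟨fun r => expWeight ℓ r • w r, (continuous_expWeight hℓ).smul w.continuous⟩

theorem norm_weighted_le (hℓ : Continuous ℓ) (w : ℝ →ᵇ Y) (r : ℝ) :
    ‖weighted hℓ w r‖ ≤ ‖w‖ * expWeight ℓ r := by
  rw [weighted, ContinuousMap.coe_mk, norm_smul, Real.norm_of_nonneg (expWeight_pos r).le, mul_comm]
  exact mul_le_mul_of_nonneg_right (w.norm_coe_le_norm r) (expWeight_pos r).le

theorem norm_weighted_sub_le (hℓ : Continuous ℓ) (w z : ℝ →ᵇ Y) (r : ℝ) :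
    ‖weighted hℓ w r - weighted hℓ z r‖ ≤ dist w z * expWeight ℓ r := by
  simpa only [weighted, ContinuousMap.coe_mk, BoundedContinuousFunction.coe_sub, Pi.sub_apply,
    smul_sub, dist_eq_norm] using norm_weighted_le hℓ (w - z) r

namespace IsCausalLipschitz

theorem exists_weighted_integral (hΦ : IsCausalLipschitz Φ ℓ) (hℓ : Continuous ℓ)
    (hΦ0 : ∀ t, ‖Φ 0 t‖ ≤ ℓ t) (c : Y) (w : ℝ →ᵇ Y) :
    ∃ z : ℝ →ᵇ Y, ∀ r,
      weighted hℓ z r = c + ∫ t in (0 : ℝ)..|r|, Φ (weighted hℓ w) t := by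
  set F : ℝ → Y := fun r => c + ∫ t in (0 : ℝ)..|r|, Φ (weighted hℓ w) t
  have hF : Continuous F := continuous_const.add <|
    (intervalIntegral.continuous_primitive (μ := volume)
      (fun a b => (Φ (weighted hℓ w)).continuous.intervalIntegrable a b) 0).comp continuous_abs
  have hE : Continuous fun r => (expWeight ℓ r)⁻¹ :=
    (continuous_expWeight hℓ).inv₀ fun r => (expWeight_pos r).ne'
  have hbound : ∀ r, ‖(expWeight ℓ r)⁻¹ • F r‖ ≤ ‖c‖ + (‖w‖ + 1) / 2 := fun r => by
    have hint : ‖∫ t in (0 : ℝ)..|r|, Φ (weighted hℓ w) t‖ ≤ (‖w‖ + 1) / 2 * expWeight ℓ |r| :=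
      norm_integral_le_expWeight hℓ (abs_nonneg r) (by positivity) fun t ht =>
        hΦ.norm_le_expWeight hℓ hΦ0 (norm_nonneg w) (norm_weighted_le hℓ w) ht
    have hone := one_le_expWeight hℓ (fun _ => hΦ.rate_nonneg) (abs_nonneg r)
    rw [expWeight_abs] at hint hone
    rw [norm_smul, norm_inv, Real.norm_of_nonneg (expWeight_pos r).le,
      inv_mul_le_iff₀ (expWeight_pos r)]
    calc ‖F r‖ ≤ ‖c‖ + (‖w‖ + 1) / 2 * expWeight ℓ r := (norm_add_le _ _).trans (by gcongr)
      _ ≤ expWeight ℓ r * (‖c‖ + (‖w‖ + 1) / 2) := by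
        linarith [le_mul_of_one_le_left (norm_nonneg c) hone]
  refine ⟨.ofNormedAddCommGroup _ (hE.smul hF) _ hbound, fun r => ?_⟩
  exact smul_inv_smul₀ (expWeight_pos r).ne' (F r)

theorem dist_le_of_weighted_eq_integral (hΦ : IsCausalLipschitz Φ ℓ) (hℓ : Continuous ℓ) {c : Y}
    {w₁ w₂ z₁ z₂ : ℝ →ᵇ Y}
    (h₁ : ∀ r, weighted hℓ z₁ r = c + ∫ t in (0 : ℝ)..|r|, Φ (weighted hℓ w₁) t)
    (h₂ : ∀ r, weighted hℓ z₂ r = c + ∫ t in (0 : ℝ)..|r|, Φ (weighted hℓ w₂) t) :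
    dist z₁ z₂ ≤ 1 / 2 * dist w₁ w₂ := by
  refine (BoundedContinuousFunction.dist_le (by positivity)).2 fun r => ?_
  have hint : ‖∫ t in (0 : ℝ)..|r|, (Φ (weighted hℓ w₁) t - Φ (weighted hℓ w₂) t)‖ ≤
      dist w₁ w₂ / 2 * expWeight ℓ |r| :=
    norm_integral_le_expWeight hℓ (abs_nonneg r) dist_nonneg fun t ht =>
      hΦ.norm_sub_le_expWeight hℓ dist_nonneg (norm_weighted_sub_le hℓ w₁ w₂) ht
  have hweighted : expWeight ℓ r • (z₁ r - z₂ r) =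
      ∫ t in (0 : ℝ)..|r|, (Φ (weighted hℓ w₁) t - Φ (weighted hℓ w₂) t) := by
    rw [smul_sub, intervalIntegral.integral_sub
      ((Φ _).continuous.intervalIntegrable _ _) ((Φ _).continuous.intervalIntegrable _ _)]
    have hdiff := congrArg₂ (· - ·) (h₁ r) (h₂ r)
    rwa [add_sub_add_left_eq_sub] at hdiff
  rw [← hweighted, norm_smul, Real.norm_of_nonneg (expWeight_pos r).le, expWeight_abs, mul_comm,
    mul_le_mul_iff_left₀ (expWeight_pos r)] at hint
  rw [dist_eq_norm, one_div, inv_mul_eq_div]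
  exact hint

theorem exists_eq_add_integral [CompleteSpace Y] (hΦ : IsCausalLipschitz Φ L) (hL : Continuous L)
    (c : Y) : ∃ v : C(ℝ, Y), ∀ r, 0 ≤ r → v r = c + ∫ t in (0 : ℝ)..r, Φ v t := by
  set ℓ : ℝ → ℝ := fun t => max (L t) ‖Φ 0 t‖
  have hℓ : Continuous ℓ := hL.max (Φ 0).continuous.norm
  have hΦℓ : IsCausalLipschitz Φ ℓ := hΦ.mono fun t => le_max_left _ _
  choose T hT using hΦℓ.exists_weighted_integral hℓ (fun t => le_max_right _ _) c
  have hlip : LipschitzWith (1 / 2) T := LipschitzWith.of_dist_le_mul fun w z => by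
    simpa using hΦℓ.dist_le_of_weighted_eq_integral hℓ (hT w) (hT z)
  have hcontr : ContractingWith (1 / 2) T := ⟨by norm_num, hlip⟩
  obtain ⟨w, hw⟩ : ∃ w, T w = w := ⟨_, hcontr.fixedPoint_isFixedPt⟩
  refine ⟨weighted hℓ w, fun r hr => ?_⟩
  simpa only [hw, abs_of_nonneg hr] using hT w r

end IsCausalLipschitz

end Causal

section RadialMean

/-- The weighted mean `∫₀¹ σⁿ ρ(rσ) dσ`. Multiplied by `n + 1` it is the average of `ρ ∘ ‖·‖` over
the ball of radius `r` in dimension `n + 1`. -/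
def radialMean (n : ℕ) (ρ : ℝ → ℝ) (r : ℝ) : ℝ :=
  ∫ σ in (0 : ℝ)..1, σ ^ n * ρ (r * σ)

variable {n : ℕ} {ρ ρ₁ ρ₂ : ℝ → ℝ}

theorem continuous_radialMean (hρ : Continuous ρ) : Continuous (radialMean n ρ) := by
  refine intervalIntegral.continuous_parametric_intervalIntegral_of_continuous' ?_ 0 1
  simp only [Function.uncurry_def]
  fun_prop

theorem radialMean_zero : radialMean n ρ 0 = ρ 0 / (n + 1) := by
  simp [radialMean, intervalIntegral.integral_mul_const, integral_pow, div_eq_inv_mul]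

theorem radialMean_congr {r : ℝ} (hr : 0 ≤ r) (h : EqOn ρ₁ ρ₂ (Ici 0)) :
    radialMean n ρ₁ r = radialMean n ρ₂ r := by
  refine intervalIntegral.integral_congr fun σ hσ => ?_
  rw [uIcc_of_le zero_le_one] at hσ
  simp only [h (mem_Ici.2 (mul_nonneg hr hσ.1))]

theorem radialMean_nonneg (hρ : ∀ r, 0 ≤ r → 0 ≤ ρ r) {r : ℝ} (hr : 0 ≤ r) :
    0 ≤ radialMean n ρ r :=
  intervalIntegral.integral_nonneg zero_le_one fun _ hσ =>
    mul_nonneg (pow_nonneg hσ.1 n) (hρ _ (mul_nonneg hr hσ.1))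

theorem radialMean_comp_mul_left (L R r : ℝ) :
    radialMean n (fun t => L * ρ (R * t)) r = L * radialMean n ρ (R * r) := by
  simp only [radialMean, mul_left_comm _ L, ← mul_assoc R, intervalIntegral.integral_const_mul]

theorem abs_radialMean_sub_le (h₁ : Continuous ρ₁) (h₂ : Continuous ρ₂) {r M : ℝ} (hr : 0 ≤ r)
    (hM : ∀ s ∈ Icc 0 r, |ρ₁ s - ρ₂ s| ≤ M) : |radialMean n ρ₁ r - radialMean n ρ₂ r| ≤ M := by
  rw [radialMean, radialMean, ← intervalIntegral.integral_sub
    ((by fun_prop : Continuous fun σ => σ ^ n * ρ₁ (r * σ)).intervalIntegrable _ _)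
    ((by fun_prop : Continuous fun σ => σ ^ n * ρ₂ (r * σ)).intervalIntegrable _ _)]
  have hbound : ∀ σ ∈ Ι (0 : ℝ) 1, ‖σ ^ n * ρ₁ (r * σ) - σ ^ n * ρ₂ (r * σ)‖ ≤ M := fun σ hσ => by
    rw [uIoc_of_le zero_le_one] at hσ
    have hdiff := hM (r * σ) ⟨mul_nonneg hr hσ.1.le, mul_le_of_le_one_right hr hσ.2⟩
    rw [← mul_sub, norm_mul, Real.norm_of_nonneg (pow_nonneg hσ.1.le n), Real.norm_eq_abs]
    exact (mul_le_of_le_one_left (abs_nonneg _) (pow_le_one₀ hσ.1.le hσ.2)).trans hdiff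
  simpa using intervalIntegral.norm_integral_le_of_norm_le_const hbound

theorem rpow_mul_le_radialMean (hρ : Continuous ρ) {r c α : ℝ} (hr : 0 ≤ r) (hα : 0 ≤ α)
    (h : ∀ s ∈ Icc 0 r, s ^ α * c ≤ ρ s) : r ^ α * c / (n + 1 + α) ≤ radialMean n ρ r := by
  have hpow : ∫ σ in (0 : ℝ)..1, σ ^ (n + α) = 1 / (n + 1 + α) := by
    have hne : (n : ℝ) + α + 1 ≠ 0 := by positivity
    rw [integral_rpow (Or.inl (by linarith [n.cast_nonneg (α := ℝ)])), Real.one_rpow,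
      Real.zero_rpow hne, sub_zero]
    ring_nf
  calc r ^ α * c / (n + 1 + α) = ∫ σ in (0 : ℝ)..1, r ^ α * c * σ ^ (n + α) := by
        rw [intervalIntegral.integral_const_mul, hpow, mul_one_div]
    _ ≤ radialMean n ρ r := by
        have hrpow := Real.continuous_rpow_const (q := n + α) (by positivity)
        refine intervalIntegral.integral_mono_on zero_le_one
          ((by fun_prop : Continuous _).intervalIntegrable _ _)
          ((by fun_prop : Continuous _).intervalIntegrable _ _) fun σ hσ => ?_
        have hbound := h (r * σ) ⟨mul_nonneg hr hσ.1, mul_le_of_le_one_right hr hσ.2⟩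
        rw [Real.mul_rpow hr hσ.1] at hbound
        rw [Real.rpow_add_of_nonneg hσ.1 n.cast_nonneg hα, Real.rpow_natCast]
        calc r ^ α * c * (σ ^ n * σ ^ α) = σ ^ n * (r ^ α * σ ^ α * c) := by ring
          _ ≤ σ ^ n * ρ (r * σ) := mul_le_mul_of_nonneg_left hbound (pow_nonneg hσ.1 n)

theorem pow_succ_mul_radialMean (r : ℝ) :
    r ^ (n + 1) * radialMean n ρ r = ∫ s in (0 : ℝ)..r, s ^ n * ρ s := by
  have hsubst := intervalIntegral.mul_integral_comp_mul_left (a := 0) (b := 1)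
    (f := fun s => s ^ n * ρ s) (c := r)
  simp only [mul_pow, mul_assoc, intervalIntegral.integral_const_mul, mul_zero, mul_one] at hsubst
  rw [radialMean, ← hsubst, pow_succ']
  ring

theorem hasDerivAt_radialMean (hρ : Continuous ρ) {r : ℝ} (hr : 0 < r) :
    HasDerivAt (radialMean n ρ) ((ρ r - (n + 1) * radialMean n ρ r) / r) r := by
  have hprim : HasDerivAt (fun r => ∫ s in (0 : ℝ)..r, s ^ n * ρ s) (r ^ n * ρ r) r :=
    (Continuous.integral_hasStrictDerivAt (by fun_prop) 0 r).hasDerivAt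
  have hquot := hprim.fun_div (hasDerivAt_pow (n + 1) r) (by positivity)
  refine (hquot.congr_of_eventuallyEq ?_).congr_deriv ?_
  · filter_upwards [lt_mem_nhds hr] with x hx
    rw [← pow_succ_mul_radialMean, mul_div_cancel_left₀ _ (by positivity)]
  · rw [← pow_succ_mul_radialMean]
    push_cast
    field_simp
    ring

end RadialMean

/-- `v` solves the radial Poisson equation `-Δ (v ∘ ‖·‖) = ρ ∘ ‖·‖` in dimension `n + 1`. The
equation `-(rⁿ v')' = rⁿ ρ` is imposed in its once integrated form, which is regular at `r = 0`. -/
structure IsRadialPoisson (n : ℕ) (ρ v : ℝ → ℝ) : Prop where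
  continuous_source : Continuous ρ
  continuous : Continuous v
  hasDerivAt : ∀ r, 0 < r → HasDerivAt v (-(r * radialMean n ρ r)) r

namespace IsRadialPoisson

variable {n : ℕ} {ρ ρ' v : ℝ → ℝ}

theorem congr_source (h : IsRadialPoisson n ρ v) (hρ' : Continuous ρ') (heq : EqOn ρ ρ' (Ici 0)) :
    IsRadialPoisson n ρ' v where
  continuous_source := hρ'
  continuous := h.continuous
  hasDerivAt r hr := by simpa only [radialMean_congr hr.le heq] using h.hasDerivAt r hr

theorem rescale (h : IsRadialPoisson n ρ v) (L : ℝ) {R : ℝ} (hR : 0 < R) :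
    IsRadialPoisson n (fun r => L * R ^ 2 * ρ (R * r)) fun r => L * v (R * r) where
  continuous_source := by have := h.continuous_source; fun_prop
  continuous := by have := h.continuous; fun_prop
  hasDerivAt r hr := by
    have hcomp := (h.hasDerivAt (R * r) (mul_pos hR hr)).comp r ((hasDerivAt_id r).const_mul R)
    refine (hcomp.const_mul L).congr_deriv ?_
    rw [radialMean_comp_mul_left]
    ring

theorem antitoneOn (h : IsRadialPoisson n ρ v) (hρ : ∀ r, 0 ≤ r → 0 ≤ ρ r) :
    AntitoneOn v (Ici 0) := by
  refine antitoneOn_of_hasDerivWithinAt_nonpos (convex_Ici 0) h.continuous.continuousOn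
    (f' := fun r => -(r * radialMean n ρ r)) ?_ ?_ <;> rw [interior_Ici]
  · exact fun r hr => (h.hasDerivAt r hr).hasDerivWithinAt
  · exact fun r hr => neg_nonpos.2 (mul_nonneg (le_of_lt hr) (radialMean_nonneg hρ (le_of_lt hr)))

/-- The quantity `(n - 1) v + r v'`, that is `r ^ (2 - n) * (r ^ (n - 1) * v)'`. -/
def virial (n : ℕ) (ρ v : ℝ → ℝ) (r : ℝ) : ℝ :=
  (n - 1) * v r - r ^ 2 * radialMean n ρ r

theorem continuous_virial (h : IsRadialPoisson n ρ v) : Continuous (virial n ρ v) := by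
  have hmean := continuous_radialMean (n := n) h.continuous_source
  have hv := h.continuous
  unfold virial
  fun_prop

theorem hasDerivAt_virial (h : IsRadialPoisson n ρ v) {r : ℝ} (hr : 0 < r) :
    HasDerivAt (virial n ρ v) (-(r * ρ r)) r := by
  refine (((h.hasDerivAt r hr).const_mul ((n : ℝ) - 1)).sub
    ((hasDerivAt_pow 2 r).mul (hasDerivAt_radialMean h.continuous_source hr))).congr_deriv ?_
  field_simp
  push_cast
  ring

theorem antitoneOn_virial (h : IsRadialPoisson n ρ v) (hρ : ∀ r, 0 ≤ r → 0 ≤ ρ r) :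
    AntitoneOn (virial n ρ v) (Ici 0) := by
  refine antitoneOn_of_hasDerivWithinAt_nonpos (convex_Ici 0) h.continuous_virial.continuousOn
    (f' := fun r => -(r * ρ r)) ?_ ?_ <;> rw [interior_Ici]
  · exact fun r hr => (h.hasDerivAt_virial hr).hasDerivWithinAt
  · exact fun r hr => neg_nonpos.2 (mul_nonneg (le_of_lt hr) (hρ r (le_of_lt hr)))

theorem hasDerivAt_pow_mul (h : IsRadialPoisson n ρ v) (hn : 1 ≤ n) {r : ℝ} (hr : 0 < r) :
    HasDerivAt (fun s => s ^ (n - 1) * v s) (r ^ (n - 1) * virial n ρ v r / r) r := by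
  obtain ⟨k, rfl⟩ := Nat.exists_eq_add_of_le' hn
  refine ((hasDerivAt_pow k r).fun_mul (h.hasDerivAt r hr)).congr_deriv ?_
  rcases k with _ | k
  · simp only [virial, Nat.cast_zero, zero_add, Nat.cast_one, sub_self]
    field_simp
    ring
  · simp only [virial, Nat.add_sub_cancel, Nat.cast_add, Nat.cast_one]
    field_simp
    ring

/-- If the virial were negative somewhere it would stay below a negative constant, so
`r ^ (n - 1) * v` would decrease at least as fast as a multiple of `-log r`. -/
theorem virial_nonneg (h : IsRadialPoisson n ρ v) (hn : 1 ≤ n) (hρ : ∀ r, 0 ≤ r → 0 ≤ ρ r)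
    (hv : ∀ r, 0 < r → 0 ≤ v r) {r₀ : ℝ} (hr₀ : 0 < r₀) : 0 ≤ virial n ρ v r₀ := by
  by_contra! hneg
  have hanti : AntitoneOn (virial n ρ v) (Ici 0) := h.antitoneOn_virial hρ
  set δ := r₀ ^ (n - 1) * -virial n ρ v r₀
  have hδ0 : 0 < δ := mul_pos (pow_pos hr₀ _) (neg_pos.2 hneg)
  set w : ℝ → ℝ := fun r => r ^ (n - 1) * v r + δ * Real.log r
  have hw : ∀ r ∈ Ici r₀, HasDerivAt w ((r ^ (n - 1) * virial n ρ v r + δ) / r) r := fun r hr => by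
    have hr0 : 0 < r := hr₀.trans_le hr
    refine ((h.hasDerivAt_pow_mul hn hr0).add
      ((Real.hasDerivAt_log hr0.ne').const_mul δ)).congr_deriv ?_
    ring
  have hw_anti : AntitoneOn w (Ici r₀) := by
    refine antitoneOn_of_hasDerivWithinAt_nonpos (convex_Ici r₀)
      (fun r hr => (hw r hr).continuousAt.continuousWithinAt)
      (fun r hr => (hw r (interior_subset hr)).hasDerivWithinAt) fun r hr => ?_
    have hr : r₀ ≤ r := interior_subset hr
    have hpow : r₀ ^ (n - 1) ≤ r ^ (n - 1) := pow_le_pow_left₀ hr₀.le hr _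
    have hvir : virial n ρ v r ≤ virial n ρ v r₀ := hanti hr₀.le (hr₀.le.trans hr) hr
    have hprod : δ ≤ r ^ (n - 1) * -virial n ρ v r :=
      mul_le_mul hpow (neg_le_neg hvir) (neg_nonneg.2 hneg.le) (pow_nonneg (hr₀.le.trans hr) _)
    exact div_nonpos_of_nonpos_of_nonneg (by linarith) (hr₀.le.trans hr)
  obtain ⟨r, hlog, hr⟩ := ((Real.tendsto_log_atTop.eventually_gt_atTop (w r₀ / δ)).and
    (eventually_ge_atTop r₀)).exists
  have hr0 : 0 < r := hr₀.trans_le hr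
  have hwr : w r ≤ w r₀ := hw_anti self_mem_Ici hr hr
  have hpos : 0 ≤ r ^ (n - 1) * v r := mul_nonneg (pow_nonneg hr0.le _) (hv r hr0)
  have hbig : w r₀ < δ * Real.log r := by rwa [div_lt_iff₀' hδ0] at hlog
  simp only [w] at hwr
  linarith

end IsRadialPoisson

theorem exists_isRadialPoisson (n : ℕ) {φ : ℝ → ℝ → ℝ} (hφ : Continuous (Function.uncurry φ))
    {K : ℝ → ℝ} (hK : Continuous K) (hK_mono : MonotoneOn K (Ici 0))
    (hφK : ∀ t, 0 ≤ t → ∀ x y, |φ t x - φ t y| ≤ K t * |x - y|) (c : ℝ) :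
    ∃ v : ℝ → ℝ, v 0 = c ∧ IsRadialPoisson n (fun r => φ r (v r)) v := by
  have hsource : ∀ v : C(ℝ, ℝ), Continuous fun r => φ r (v r) := fun v =>
    hφ.comp (continuous_id.prodMk v.continuous)
  have hvel : ∀ v : C(ℝ, ℝ), Continuous fun r => -(r * radialMean n (fun s => φ s (v s)) r) :=
    fun v => (continuous_id.mul (continuous_radialMean (hsource v))).neg
  have hlip : IsCausalLipschitz (fun v => ⟨_, hvel v⟩) fun t => t * K t := fun v w t M ht hM => by
    have hKt : 0 ≤ K t := by simpa using (abs_nonneg _).trans (hφK t ht 0 1)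
    have hmean : |radialMean n (fun s => φ s (w s)) t - radialMean n (fun s => φ s (v s)) t| ≤
        K t * M := abs_radialMean_sub_le (hsource w) (hsource v) ht fun s hs =>
      calc |φ s (w s) - φ s (v s)| ≤ K s * |w s - v s| := hφK s hs.1 _ _
        _ ≤ K t * M := by
          rw [abs_sub_comm]
          exact mul_le_mul (hK_mono hs.1 ht hs.2) (hM s hs) (abs_nonneg _) hKt
    simpa only [ContinuousMap.coe_mk, neg_sub_neg, ← mul_sub, norm_mul, Real.norm_of_nonneg ht,
      Real.norm_eq_abs, mul_assoc] using mul_le_mul_of_nonneg_left hmean ht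
  obtain ⟨v, hv⟩ := hlip.exists_eq_add_integral (by fun_prop) c
  refine ⟨v, by simpa using hv 0 le_rfl, hsource v, v.continuous, fun r hr => ?_⟩
  refine (((hvel v).integral_hasStrictDerivAt 0 r).hasDerivAt.const_add c).congr_of_eventuallyEq ?_
  filter_upwards [lt_mem_nhds hr] with x hx using hv x hx.le

/-- The right-hand side `|x|^α v^p` of the Hénon equation for a radial function of profile `v`. -/
def henonSource (α p : ℝ) (v : ℝ → ℝ) (r : ℝ) : ℝ :=
  r ^ α * v r ^ p

theorem continuous_henonSource {α p : ℝ} {v : ℝ → ℝ} (hα : 0 ≤ α) (hp : 0 ≤ p)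
    (hv : Continuous v) : Continuous (henonSource α p v) :=
  (Real.continuous_rpow_const hα).mul (hv.rpow_const fun _ => Or.inr hp)

theorem henonSource_nonneg {α p : ℝ} {v : ℝ → ℝ} {r : ℝ} (hr : 0 ≤ r) (hv : 0 ≤ v r) :
    0 ≤ henonSource α p v r :=
  mul_nonneg (Real.rpow_nonneg hr α) (Real.rpow_nonneg hv p)

/-- The Pohozaev functional `r^(n+1) (r^α v^(p+1) / (p+1) + v'² / 2 + (n-1) v v' / (2r))` of the
Hénon equation in dimension `n + 1`, written with `v' = -r * radialMean`. -/
def pohozaev (n : ℕ) (α p : ℝ) (v : ℝ → ℝ) (r : ℝ) : ℝ :=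
  r ^ (n + 1) * (r ^ α * v r ^ (p + 1)) / (p + 1) -
    r ^ (n + 1) * radialMean n (henonSource α p v) r *
      IsRadialPoisson.virial n (henonSource α p v) v r / 2

namespace IsRadialPoisson

variable {n : ℕ} {α p : ℝ} {v : ℝ → ℝ}

theorem rpow_mul_rpow_sub_one_le (h : IsRadialPoisson n (henonSource α p v) v) (hn : 1 ≤ n)
    (hα : 0 ≤ α) (hp : 0 ≤ p) (hv : ∀ r, 0 ≤ r → 0 < v r) {r : ℝ} (hr : 0 < r) :
    r ^ (2 + α) * v r ^ (p - 1) ≤ (n - 1) * (n + 1 + α) := by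
  have hsource : ∀ s, 0 ≤ s → 0 ≤ henonSource α p v s := fun s hs =>
    henonSource_nonneg hs (hv s hs).le
  have hmean : r ^ α * v r ^ p / (n + 1 + α) ≤ radialMean n (henonSource α p v) r :=
    rpow_mul_le_radialMean h.continuous_source hr.le hα fun s hs =>
      mul_le_mul_of_nonneg_left (Real.rpow_le_rpow (hv r hr.le).le
        (h.antitoneOn hsource hs.1 hr.le hs.2) hp) (Real.rpow_nonneg hs.1 α)
  have hvirial : r ^ 2 * radialMean n (henonSource α p v) r ≤ (n - 1) * v r :=
    sub_nonneg.1 (h.virial_nonneg hn hsource (fun s hs => (hv s hs.le).le) hr)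
  have hvr := hv r hr.le
  refine le_of_mul_le_mul_right ?_ hvr
  calc r ^ (2 + α) * v r ^ (p - 1) * v r
      = (n + 1 + α) * (r ^ 2 * (r ^ α * v r ^ p / (n + 1 + α))) := by
        rw [Real.rpow_add hr, Real.rpow_two, Real.rpow_sub_one hvr.ne']
        field_simp
    _ ≤ (n + 1 + α) * (r ^ 2 * radialMean n (henonSource α p v) r) := by gcongr
    _ ≤ (n + 1 + α) * ((n - 1) * v r) := by gcongr (n + 1 + α) * ?_
    _ = (n - 1) * (n + 1 + α) * v r := by ring

theorem hasDerivAt_pohozaev (h : IsRadialPoisson n (henonSource α p v) v) (hp : -1 < p)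
    {r : ℝ} (hr : 0 < r) (hv : 0 < v r) :
    HasDerivAt (pohozaev n α p v)
      (((n + 1 + α) / (p + 1) - (n - 1) / 2) * (r ^ n * (r ^ α * v r ^ (p + 1)))) r := by
  set A := radialMean n (henonSource α p v)
  have hflux : HasDerivAt (fun s => s ^ (n + 1) * A s) (r ^ n * henonSource α p v r) r := by
    refine ((hasDerivAt_pow (n + 1) r).fun_mul
      (hasDerivAt_radialMean h.continuous_source hr)).congr_deriv ?_
    field_simp
    push_cast
    ring
  have hpotential := (hasDerivAt_pow (n + 1) r).fun_mul
    ((Real.hasDerivAt_rpow_const (p := α) (Or.inl hr.ne')).fun_mul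
      ((h.hasDerivAt r hr).rpow_const (p := p + 1) (Or.inl hv.ne')))
  refine ((hpotential.div_const (p + 1)).sub
    ((hflux.mul (h.hasDerivAt_virial hr)).div_const 2)).congr_deriv ?_
  have hp1 : p + 1 ≠ 0 := by linarith
  simp only [virial, henonSource, add_sub_cancel_right, Real.rpow_add_one hv.ne',
    Real.rpow_sub_one hr.ne', Nat.add_sub_cancel]
  push_cast
  field_simp
  ring

theorem continuous_pohozaev (h : IsRadialPoisson n (henonSource α p v) v) (hα : 0 ≤ α)
    (hp : -1 ≤ p) : Continuous (pohozaev n α p v) := by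
  have hvpow := h.continuous.rpow_const (p := p + 1) fun _ => Or.inr (by linarith)
  have hmean := continuous_radialMean (n := n) h.continuous_source
  have hvirial := h.continuous_virial
  unfold pohozaev
  fun_prop

theorem strictMonoOn_pohozaev (h : IsRadialPoisson n (henonSource α p v) v) (hα : 0 ≤ α)
    (hp : -1 < p) (hsub : ((n : ℝ) - 1) * (p + 1) < 2 * (n + 1 + α))
    (hv : ∀ r, 0 ≤ r → 0 < v r) : StrictMonoOn (pohozaev n α p v) (Ici 0) := by
  have hcoeff : (0 : ℝ) < (n + 1 + α) / (p + 1) - (n - 1) / 2 := by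
    rw [sub_pos, div_lt_div_iff₀ two_pos (by linarith)]
    linarith
  refine strictMonoOn_of_deriv_pos (convex_Ici 0) (h.continuous_pohozaev hα hp.le).continuousOn
    fun r hr => ?_
  rw [interior_Ici, mem_Ioi] at hr
  have hvr := hv r hr.le
  rw [(h.hasDerivAt_pohozaev hp hr hvr).deriv]
  positivity

theorem pohozaev_le_rpow_neg (h : IsRadialPoisson n (henonSource α p v) v) (hn : 1 ≤ n)
    (hα : 0 ≤ α) (hp : 1 < p) (hv : ∀ r, 0 ≤ r → 0 < v r) {r : ℝ} (hr : 0 < r) :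
    pohozaev n α p v r ≤ (((n : ℝ) - 1) * (n + 1 + α)) ^ ((p + 1) / (p - 1)) *
      r ^ (-((2 + α) * ((p + 1) / (p - 1)) - (n + 1 + α))) := by
  have hvr := hv r hr.le
  have hp1 : 0 < p - 1 := sub_pos.2 hp
  set q := (p + 1) / (p - 1) with hq
  have hsource : ∀ s, 0 ≤ s → 0 ≤ henonSource α p v s := fun s hs =>
    henonSource_nonneg hs (hv s hs).le
  have hvirial := h.virial_nonneg hn hsource (fun s hs => (hv s hs.le).le) hr
  have hmean := radialMean_nonneg (n := n) hsource hr.le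
  have hdecay : r ^ ((2 + α) * q) * v r ^ (p + 1) ≤ (((n : ℝ) - 1) * (n + 1 + α)) ^ q := by
    have hmono := Real.rpow_le_rpow (by positivity)
      (h.rpow_mul_rpow_sub_one_le hn hα (by linarith) hv hr) (by positivity : 0 ≤ q)
    rwa [Real.mul_rpow (by positivity) (by positivity), ← Real.rpow_mul hr.le,
      ← Real.rpow_mul hvr.le, hq, mul_div_cancel₀ _ hp1.ne'] at hmono
  calc pohozaev n α p v r ≤ r ^ (n + 1) * (r ^ α * v r ^ (p + 1)) := by
        have hpos : 0 ≤ r ^ (n + 1) * (r ^ α * v r ^ (p + 1)) := by positivity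
        exact (sub_le_self _ (by positivity)).trans (div_le_self hpos (by linarith))
    _ = r ^ ((2 + α) * q) * v r ^ (p + 1) * r ^ (-((2 + α) * q - (n + 1 + α))) := by
        rw [neg_sub, Real.rpow_sub hr, Real.rpow_add hr, ← Nat.cast_add_one, Real.rpow_natCast]
        field_simp
    _ ≤ _ := mul_le_mul_of_nonneg_right hdecay (by positivity)

/-- A positive solution on the whole half-line would have a Pohozaev functional which starts from
`0`, is strictly increasing, and is dominated by a negative power of `r`. -/
theorem exists_nonpos (h : IsRadialPoisson n (henonSource α p v) v) (hn : 1 ≤ n) (hα : 0 ≤ α)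
    (hp : 1 < p) (hsub : ((n : ℝ) - 1) * (p + 1) < 2 * (n + 1 + α)) : ∃ r, 0 ≤ r ∧ v r ≤ 0 := by
  by_contra! hv
  have hp1 : 0 < p - 1 := sub_pos.2 hp
  have hmono := h.strictMonoOn_pohozaev hα (by linarith) hsub hv
  have hone : 0 < pohozaev n α p v 1 := by
    have hlt := hmono self_mem_Ici (mem_Ici.2 zero_le_one) one_pos
    simpa [pohozaev] using hlt
  have hexp : 0 < (2 + α) * ((p + 1) / (p - 1)) - (n + 1 + α) := by
    rw [sub_pos, mul_div_assoc', lt_div_iff₀ hp1]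
    linarith
  have hlim : Tendsto (fun r : ℝ => (((n : ℝ) - 1) * (n + 1 + α)) ^ ((p + 1) / (p - 1)) *
      r ^ (-((2 + α) * ((p + 1) / (p - 1)) - (n + 1 + α)))) atTop (𝓝 0) := by
    simpa using (tendsto_rpow_neg_atTop hexp).const_mul _
  refine hone.not_ge (ge_of_tendsto hlim ?_)
  filter_upwards [eventually_ge_atTop 1] with r hr
  exact (hmono.monotoneOn (mem_Ici.2 zero_le_one) (mem_Ici.2 (zero_le_one.trans hr)) hr).trans
    (h.pohozaev_le_rpow_neg hn hα hp hv (zero_lt_one.trans_le hr))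

end IsRadialPoisson

theorem tendsto_norm_nhdsGE_zero {G : Type*} [SeminormedAddCommGroup G] :
    Tendsto (fun y : G => ‖y‖) (𝓝 0) (𝓝[≥] 0) :=
  tendsto_nhdsWithin_of_tendsto_nhds_of_eventually_within _ tendsto_norm_zero
    (Eventually.of_forall fun _ => norm_nonneg _)

section Radial

open InnerProductSpace

variable {F : Type*} [NormedAddCommGroup F] [InnerProductSpace ℝ F] {V a b : ℝ → ℝ}

theorem hasFDerivAt_norm {x : F} (hx : x ≠ 0) :
    HasFDerivAt (fun y : F => ‖y‖) (‖x‖⁻¹ • innerSL ℝ x) x := by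
  have hsqrt := (hasStrictFDerivAt_norm_sq x).hasFDerivAt.sqrt
    (pow_ne_zero 2 (norm_ne_zero_iff.2 hx))
  simp only [Real.sqrt_sq (norm_nonneg _)] at hsqrt
  refine hsqrt.congr_fderiv ?_
  rw [← Nat.cast_smul_eq_nsmul ℝ, smul_smul]
  congr 1
  push_cast
  field_simp

theorem hasFDerivAt_comp_norm (hV : Continuous V) (ha : Continuous a)
    (hVa : ∀ r, 0 < r → HasDerivAt V (r * a r) r) (x : F) :
    HasFDerivAt (fun y : F => V ‖y‖) (innerSL ℝ (a ‖x‖ • x)) x := by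
  rcases eq_or_ne x 0 with rfl | hx
  · have hlim : Tendsto (deriv V) (𝓝[>] 0) (𝓝 0) := by
      have hcont : Tendsto (fun r => r * a r) (𝓝[>] 0) (𝓝 0) :=
        ((continuous_id.mul ha).tendsto' 0 0 (zero_mul _)).mono_left nhdsWithin_le_nhds
      refine hcont.congr' ?_
      filter_upwards [self_mem_nhdsWithin] with r hr using (hVa r hr).deriv.symm
    have hright : HasDerivWithinAt V 0 (Ici 0) 0 :=
      hasDerivWithinAt_Ici_of_tendsto_deriv
        (fun r hr => (hVa r hr).differentiableAt.differentiableWithinAt)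
        hV.continuousWithinAt self_mem_nhdsWithin hlim
    rw [hasDerivWithinAt_iff_isLittleO] at hright
    rw [hasFDerivAt_iff_isLittleO]
    have hnorm := hright.comp_tendsto (tendsto_norm_nhdsGE_zero (G := F))
    simp only [Function.comp_def, sub_zero, smul_zero] at hnorm
    simpa using hnorm.of_norm_right
  · refine ((hVa ‖x‖ (norm_pos_iff.2 hx)).comp_hasFDerivAt x (hasFDerivAt_norm hx)).congr_fderiv ?_
    rw [smul_smul, map_smulₛₗ, mul_right_comm, mul_inv_cancel₀ (norm_ne_zero_iff.2 hx), one_mul]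
    rfl

theorem hasFDerivAt_smul_self (ha : Continuous a) (hab : ∀ r, 0 < r → HasDerivAt a (b r) r)
    (x : F) : HasFDerivAt (fun y : F => a ‖y‖ • y)
      (a ‖x‖ • .id ℝ F + (‖x‖⁻¹ * b ‖x‖) • rankOne ℝ x x) x := by
  rcases eq_or_ne x 0 with rfl | hx
  · have hcont : Tendsto (fun y : F => a ‖y‖ - a 0) (𝓝 0) (𝓝 0) :=
      Continuous.tendsto' (by fun_prop) 0 0 (by simp)
    rw [hasFDerivAt_iff_isLittleO]
    simpa [← sub_smul] using ((Asymptotics.isLittleO_one_iff ℝ).2 hcont).smul_isBigO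
      (Asymptotics.isBigO_refl (fun y : F => y) (𝓝 0))
  · have hcoeff := (hab ‖x‖ (norm_pos_iff.2 hx)).comp_hasFDerivAt x (hasFDerivAt_norm hx)
    refine (hcoeff.smul (hasFDerivAt_id x)).congr_fderiv ?_
    ext y
    simp [smul_smul, mul_assoc, mul_left_comm]

theorem continuous_radial_hessian (ha : Continuous a) (hb : ContinuousOn b (Ioi 0))
    (hb0 : Tendsto (fun r => r * b r) (𝓝[>] 0) (𝓝 0)) :
    Continuous fun x : F => a ‖x‖ • ContinuousLinearMap.id ℝ F +
      (‖x‖⁻¹ * b ‖x‖) • rankOne ℝ x x := by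
  refine Continuous.add (by fun_prop) (continuous_iff_continuousAt.2 fun x => ?_)
  rcases eq_or_ne x 0 with rfl | hx
  · have hnorm : ∀ y : F, ‖(‖y‖⁻¹ * b ‖y‖) • rankOne ℝ y y‖ = |‖y‖ * b ‖y‖| := fun y => by
      rcases eq_or_ne y 0 with rfl | hy
      · simp
      · rw [norm_smul, norm_rankOne, Real.norm_eq_abs, abs_mul, abs_mul, abs_inv, abs_norm]
        field_simp
    have hlim : Tendsto (fun r => |r * b r|) (𝓝[≥] 0) (𝓝 0) := by
      rw [← Ioi_insert, nhdsWithin_insert, tendsto_sup]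
      exact ⟨tendsto_pure_left.2 fun s hs => by simpa using mem_of_mem_nhds hs,
        by simpa using hb0.abs⟩
    rw [ContinuousAt, tendsto_iff_norm_sub_tendsto_zero]
    simpa [hnorm, Function.comp_def] using hlim.comp (tendsto_norm_nhdsGE_zero (G := F))
  · have hbx : ContinuousAt (fun y : F => b ‖y‖) x :=
      (hb.continuousAt (Ioi_mem_nhds (norm_pos_iff.2 hx))).comp continuous_norm.continuousAt
    have hrank : Continuous fun y : F => rankOne ℝ y y :=
      ((rankOne ℝ (E := F) (F := F)).continuous).clm_apply continuous_id
    exact ((continuous_norm.continuousAt.inv₀ (norm_ne_zero_iff.2 hx)).mul hbx).smul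
      hrank.continuousAt

theorem contDiff_two_comp_norm (hV : Continuous V) (ha : Continuous a)
    (hb : ContinuousOn b (Ioi 0)) (hVa : ∀ r, 0 < r → HasDerivAt V (r * a r) r)
    (hab : ∀ r, 0 < r → HasDerivAt a (b r) r) (hb0 : Tendsto (fun r => r * b r) (𝓝[>] 0) (𝓝 0)) :
    ContDiff ℝ 2 fun x : F => V ‖x‖ := by
  have hgrad : ContDiff ℝ 1 fun x : F => a ‖x‖ • x :=
    contDiff_one_iff_hasFDerivAt.2
      ⟨_, continuous_radial_hessian ha hb hb0, hasFDerivAt_smul_self ha hab⟩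
  refine (contDiff_succ_iff_hasFDerivAt (n := 1)).2
    ⟨_, (ContinuousLinearMap.contDiff
      (isBoundedBilinearMap_inner (𝕜 := ℝ) (E := F)).toContinuousLinearMap).comp hgrad,
    hasFDerivAt_comp_norm hV ha hVa⟩

theorem lap_comp_norm {N : ℕ} (hV : Continuous V) (ha : Continuous a)
    (hVa : ∀ r, 0 < r → HasDerivAt V (r * a r) r) (hab : ∀ r, 0 < r → HasDerivAt a (b r) r)
    (x : E N) : lap (fun y => V ‖y‖) x = N * a ‖x‖ + ‖x‖ * b ‖x‖ := by
  have hpartial : ∀ i : Fin N, fderiv ℝ (fun y : E N => fderiv ℝ (fun z : E N => V ‖z‖) y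
      (EuclideanSpace.single i 1)) x (EuclideanSpace.single i 1) =
      a ‖x‖ + ‖x‖⁻¹ * b ‖x‖ * x i ^ 2 := fun i => by
    have hgrad : ∀ y : E N, fderiv ℝ (fun z : E N => V ‖z‖) y (EuclideanSpace.single i 1) =
        inner ℝ (EuclideanSpace.single i 1) (a ‖y‖ • y) := fun y => by
      rw [(hasFDerivAt_comp_norm hV ha hVa y).fderiv, innerSL_apply_apply, real_inner_comm]
    have hcoord :
        HasFDerivAt (fun y : E N => inner ℝ (EuclideanSpace.single i 1) (a ‖y‖ • y)) _ x :=
      (innerSL ℝ (EuclideanSpace.single i 1)).hasFDerivAt.comp x (hasFDerivAt_smul_self ha hab x)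
    simp only [hgrad, hcoord.fderiv]
    simp [EuclideanSpace.inner_single_left, EuclideanSpace.inner_single_right, sq, mul_assoc]
  rw [lap, Finset.sum_congr rfl fun i _ => hpartial i, Finset.sum_add_distrib, Finset.sum_const,
    ← Finset.mul_sum, ← EuclideanSpace.real_norm_sq_eq, Finset.card_univ, Fintype.card_fin,
    nsmul_eq_mul]
  rcases eq_or_ne ‖x‖ 0 with hx | _
  · simp [hx]
  · field_simp

end Radial

namespace IsRadialPoisson

variable {n : ℕ} {ρ v : ℝ → ℝ}

theorem tendsto_mul_deriv_radialMean (hρ : Continuous ρ) :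
    Tendsto (fun r => r * ((ρ r - (n + 1) * radialMean n ρ r) / r)) (𝓝[>] 0) (𝓝 0) := by
  have hmean := continuous_radialMean (n := n) hρ
  have hlim : Tendsto (fun r => ρ r - (n + 1) * radialMean n ρ r) (𝓝[>] 0) (𝓝 0) := by
    refine (Continuous.tendsto' (by fun_prop) 0 0 ?_).mono_left nhdsWithin_le_nhds
    rw [radialMean_zero]
    field_simp
    ring
  refine hlim.congr' ?_
  filter_upwards [self_mem_nhdsWithin] with r hr using (mul_div_cancel₀ _ (ne_of_gt hr)).symm

theorem contDiff_comp_norm {F : Type*} [NormedAddCommGroup F] [InnerProductSpace ℝ F]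
    (h : IsRadialPoisson n ρ v) : ContDiff ℝ 2 fun x : F => v ‖x‖ := by
  have hρ := h.continuous_source
  have hmean := continuous_radialMean (n := n) hρ
  refine contDiff_two_comp_norm h.continuous hmean.neg
    (b := fun r => -((ρ r - (n + 1) * radialMean n ρ r) / r))
    (ContinuousOn.neg (ContinuousOn.div (by fun_prop) continuousOn_id fun r hr => ne_of_gt hr))
    (fun r hr => (h.hasDerivAt r hr).congr_deriv (neg_mul_eq_mul_neg _ _))
    (fun r hr => (hasDerivAt_radialMean hρ hr).neg) ?_
  simpa only [mul_neg, neg_zero] using (tendsto_mul_deriv_radialMean hρ).neg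

theorem neg_lap_comp_norm (h : IsRadialPoisson n ρ v) (x : E (n + 1)) :
    -lap (fun y => v ‖y‖) x = ρ ‖x‖ := by
  have hρ := h.continuous_source
  rw [lap_comp_norm h.continuous (continuous_radialMean (n := n) hρ).neg
    (fun r hr => (h.hasDerivAt r hr).congr_deriv (neg_mul_eq_mul_neg _ _))
    (fun r hr => (hasDerivAt_radialMean hρ hr).neg), Pi.neg_apply]
  rcases (norm_nonneg x).eq_or_lt with hx | hx
  · rw [← hx, radialMean_zero]
    push_cast
    field_simp
    ring
  · push_cast
    field_simp
    ring

end IsRadialPoisson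

/-- The nonlinearity `y ↦ y ^ p`, made globally Lipschitz by projecting `y` to `[0, 1]` first. -/
def clampPow (p y : ℝ) : ℝ :=
  (projIcc (0 : ℝ) 1 zero_le_one y : ℝ) ^ p

theorem clampPow_nonneg (p y : ℝ) : 0 ≤ clampPow p y :=
  Real.rpow_nonneg (projIcc _ _ _ y).2.1 p

theorem clampPow_of_mem (p : ℝ) {y : ℝ} (hy : y ∈ Icc (0 : ℝ) 1) : clampPow p y = y ^ p := by
  rw [clampPow, projIcc_of_mem zero_le_one hy]

theorem continuous_clampPow {p : ℝ} (hp : 0 ≤ p) : Continuous (clampPow p) :=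
  (continuous_subtype_val.comp continuous_projIcc).rpow_const fun _ => Or.inr hp

theorem abs_clampPow_sub_le {p : ℝ} (hp : 1 ≤ p) (x y : ℝ) :
    |clampPow p x - clampPow p y| ≤ p * |x - y| := by
  have hderiv : ∀ z ∈ Icc (0 : ℝ) 1, ‖p * z ^ (p - 1)‖ ≤ p := fun z hz => by
    have hpow : z ^ (p - 1) ≤ 1 := Real.rpow_le_one hz.1 hz.2 (sub_nonneg.2 hp)
    have hpow0 : 0 ≤ z ^ (p - 1) := Real.rpow_nonneg hz.1 _
    rw [Real.norm_of_nonneg (by positivity)]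
    exact mul_le_of_le_one_right (by positivity) hpow
  have hrpow := (convex_Icc (0 : ℝ) 1).norm_image_sub_le_of_norm_hasDerivWithin_le
    (fun z _ => (Real.hasDerivAt_rpow_const (Or.inr hp)).hasDerivWithinAt) hderiv
    (projIcc _ _ zero_le_one y).2 (projIcc _ _ zero_le_one x).2
  refine hrpow.trans (mul_le_mul_of_nonneg_left ?_ (zero_le_one.trans hp))
  simpa [Subtype.dist_eq, Real.dist_eq] using (LipschitzWith.projIcc zero_le_one).dist_le_mul x y

theorem exists_first_zero {v : ℝ → ℝ} (hv : Continuous v) (h0 : 0 < v 0)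
    (h : ∃ r, 0 ≤ r ∧ v r ≤ 0) : ∃ R, 0 < R ∧ v R = 0 ∧ ∀ r ∈ Ico 0 R, 0 < v r := by
  obtain ⟨r₁, hr₁, hvr₁⟩ := h
  obtain ⟨R, ⟨⟨hR0, hR₁⟩, hvR⟩, hleast⟩ :=
    (isCompact_Icc.inter_right (isClosed_le hv continuous_const)).exists_isLeast
      (⟨r₁, ⟨hr₁, le_rfl⟩, hvr₁⟩ : (Icc 0 r₁ ∩ {r | v r ≤ 0}).Nonempty)
  have hmin : ∀ r, 0 ≤ r → v r ≤ 0 → R ≤ r := fun r hr hvr => by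
    rcases le_total r r₁ with hrr₁ | hrr₁
    exacts [hleast ⟨⟨hr, hrr₁⟩, hvr⟩, hR₁.trans hrr₁]
  obtain ⟨r, ⟨hr0, hrR⟩, hvr⟩ := intermediate_value_Icc' hR0 hv.continuousOn ⟨hvR, h0.le⟩
  obtain rfl : r = R := hrR.antisymm (hmin r hr0 hvr.le)
  refine ⟨r, hr0.lt_of_ne fun h => ?_, hvr, fun s hs => ?_⟩
  · exact h0.ne' (by rwa [← h] at hvr)
  · by_contra! hvs
    exact hs.2.not_ge (hmin s hs.1 hvs)

section Henon

variable {n : ℕ} {α p : ℝ}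

theorem henonSource_rescale {v : ℝ → ℝ} {r R : ℝ} (hp : p ≠ 1) (hr : 0 ≤ r) (hR : 0 < R)
    (hv : 0 ≤ v (R * r)) :
    R ^ ((2 + α) / (p - 1)) * R ^ 2 * henonSource α p v (R * r) =
      henonSource α p (fun t => R ^ ((2 + α) / (p - 1)) * v (R * t)) r := by
  have hscale : (R ^ ((2 + α) / (p - 1))) ^ p = R ^ ((2 + α) / (p - 1)) * R ^ 2 * R ^ α := by
    have hp1 : p - 1 ≠ 0 := sub_ne_zero.2 hp
    rw [← Real.rpow_two, ← Real.rpow_mul hR.le, ← Real.rpow_add hR, ← Real.rpow_add hR]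
    congr 1
    field_simp
    ring
  simp only [henonSource]
  rw [Real.mul_rpow hR.le hr, Real.mul_rpow (by positivity) hv, hscale]
  ring

theorem exists_isRadialPoisson_clampPow (n : ℕ) (hα : 0 ≤ α) (hp : 1 ≤ p) :
    ∃ v : ℝ → ℝ, v 0 = 1 ∧ IsRadialPoisson n (fun r => r ^ α * clampPow p (v r)) v := by
  have hclamp := continuous_clampPow (zero_le_one.trans hp)
  refine exists_isRadialPoisson n (φ := fun r y => r ^ α * clampPow p y) (K := fun r => r ^ α * p)
    (by fun_prop) (by fun_prop) (fun s hs t _ hst => ?_) (fun t ht x y => ?_) 1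
  · exact mul_le_mul_of_nonneg_right (Real.rpow_le_rpow hs hst hα) (zero_le_one.trans hp)
  · rw [← mul_sub, abs_mul, abs_of_nonneg (Real.rpow_nonneg ht α), mul_assoc]
    exact mul_le_mul_of_nonneg_left (abs_clampPow_sub_le hp x y) (Real.rpow_nonneg ht α)

theorem exists_isRadialPoisson_first_zero (hn : 1 ≤ n) (hα : 0 ≤ α) (hp : 1 < p)
    (hsub : ((n : ℝ) - 1) * (p + 1) < 2 * (n + 1 + α)) :
    ∃ (ρ v : ℝ → ℝ) (R : ℝ), IsRadialPoisson n ρ v ∧ 0 < R ∧ v R = 0 ∧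
      ∀ r ∈ Ico 0 R, 0 < v r ∧ ρ r = henonSource α p v r := by
  obtain ⟨v, hv0, h⟩ := exists_isRadialPoisson_clampPow n hα hp.le
  have hle : ∀ r, 0 ≤ r → v r ≤ 1 := fun r hr => hv0 ▸
    h.antitoneOn (fun s hs => mul_nonneg (Real.rpow_nonneg hs α) (clampPow_nonneg p _))
      self_mem_Ici hr hr
  have hsource : ∀ r, 0 ≤ r → 0 < v r → r ^ α * clampPow p (v r) = henonSource α p v r :=
    fun r hr hvr => by rw [henonSource, clampPow_of_mem p ⟨hvr.le, hle r hr⟩]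
  have hnonpos : ∃ r, 0 ≤ r ∧ v r ≤ 0 := by
    by_contra! hpos
    obtain ⟨r, hr, hvr⟩ := (h.congr_source (continuous_henonSource hα (by linarith) h.continuous)
      fun r hr => hsource r hr (hpos r hr)).exists_nonpos hn hα hp hsub
    exact hvr.not_gt (hpos r hr)
  obtain ⟨R, hR, hvR, hpos⟩ := exists_first_zero h.continuous (hv0 ▸ one_pos) hnonpos
  exact ⟨_, v, R, h, hR, hvR, fun r hr => ⟨hpos r hr, hsource r hr.1 (hpos r hr)⟩⟩

theorem exists_isRadialPoisson_unit_ball (hn : 1 ≤ n) (hα : 0 ≤ α) (hp : 1 < p)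
    (hsub : ((n : ℝ) - 1) * (p + 1) < 2 * (n + 1 + α)) :
    ∃ ρ V : ℝ → ℝ, IsRadialPoisson n ρ V ∧ V 1 = 0 ∧
      ∀ r ∈ Ico 0 1, 0 < V r ∧ ρ r = henonSource α p V r := by
  obtain ⟨ρ, v, R, h, hR, hvR, hsol⟩ := exists_isRadialPoisson_first_zero hn hα hp hsub
  refine ⟨_, _, h.rescale (R ^ ((2 + α) / (p - 1))) hR, by simp [hvR], fun r hr => ?_⟩
  obtain ⟨hpos, heq⟩ := hsol (R * r) ⟨mul_nonneg hR.le hr.1, mul_lt_of_lt_one_right hR hr.2⟩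
  exact ⟨mul_pos (Real.rpow_pos_of_pos hR _) hpos,
    by rw [heq, henonSource_rescale hp.ne' hr.1 hR hpos.le]⟩

end Henon

theorem stmt2_general {N : ℕ} (hN : 2 ≤ N) (α p : ℝ) (hα : 0 ≤ α) (hp : 1 < p)
    (hsub : ((N : ℝ) - 2) * (p + 1) < 2 * (N + α)) :
    ∃ u : E N → ℝ,
      ContinuousOn u (closedBall 0 1) ∧
      ContDiffOn ℝ 2 u (ball 0 1) ∧
      (∀ x y : E N, ‖x‖ = ‖y‖ → u x = u y) ∧
      (∀ x ∈ ball (0 : E N) 1, 0 < u x) ∧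
      (∀ x : E N, ‖x‖ = 1 → u x = 0) ∧
      (∀ x ∈ ball (0 : E N) 1, -lap u x = ‖x‖ ^ α * u x ^ p) := by
  obtain ⟨n, rfl⟩ := Nat.exists_eq_add_of_le' (one_le_two.trans hN)
  obtain ⟨ρ, V, h, hV1, hsol⟩ := exists_isRadialPoisson_unit_ball (n := n) (α := α) (p := p)
    (by lia) hα hp (by push_cast at hsub; linarith)
  have hnorm : ∀ x ∈ ball (0 : E (n + 1)) 1, ‖x‖ ∈ Ico (0 : ℝ) 1 := fun x hx =>
    ⟨norm_nonneg x, mem_ball_zero_iff.1 hx⟩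
  refine ⟨fun x => V ‖x‖, (h.continuous.comp continuous_norm).continuousOn,
    h.contDiff_comp_norm.contDiffOn, fun x y hxy => congrArg V hxy,
    fun x hx => (hsol _ (hnorm x hx)).1, fun x hx => by simp only [hx, hV1], fun x hx => ?_⟩
  rw [h.neg_lap_comp_norm, (hsol _ (hnorm x hx)).2, henonSource]

/-- Ni's theorem: the Hénon problem -Δu = |x|^α u^p in the unit ball has a radial
positive classical solution for p+1 below the enlarged critical exponent 2(N+α)/(N-2). -/
theorem stmt2 {N : ℕ} (hN : 3 ≤ N) (α p : ℝ) (hα : 0 < α) (hp : 1 < p)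
    (hsub : p + 1 < 2 * ((N : ℝ) + α) / ((N : ℝ) - 2)) :
    ∃ u : E N → ℝ,
      ContinuousOn u (closedBall 0 1) ∧
      ContDiffOn ℝ 2 u (ball 0 1) ∧
      (∀ x y : E N, ‖x‖ = ‖y‖ → u x = u y) ∧
      (∀ x ∈ ball (0 : E N) 1, 0 < u x) ∧
      (∀ x : E N, ‖x‖ = 1 → u x = 0) ∧
      (∀ x ∈ ball (0 : E N) 1, -lap u x = ‖x‖ ^ α * u x ^ p) := by
  have hN2 : (0 : ℝ) < N - 2 := sub_pos.2 (by exact_mod_cast hN)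
  exact stmt2_general (by lia) α p hα.le hp (by rwa [lt_div_iff₀' hN2] at hsub)
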